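/- arXiv:1408.5377 — 10 statements merged into one kernel-verified Lean document; each statement's English description precedes it below -/
import Mathlib

section
/- Soundness of the Time-Table failure check for RobustCumulative (Proposition 1): If there exists a time t ∈ ℕ such that the sum of h a over all activities a ∈ A whose compulsory part contains t (i.e. smax a ≤ t < smin a + p a), plus the maximum of h a over all activities a ∈ A whose K-compulsory part contains t (this maximum taken as 0 when no such activity exists), is strictly greater than C, then no consistent assignment σ satisfies the RCuSP constraint. -/
/-!
Fix the failing time `t` and a consistent `σ`. An activity whose compulsory part contains `t` is
running at `t` under `σ`. If the K-compulsory maximum is attained at `b`, then under `σ` either `b`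
has ended by `t`, so `t` lies in its slack window and `h b` is bounded by the slack maximum of `σ`;
or `b` is still running at `t`, and since `t` is outside the compulsory part of `b`, its height adds
to the sum over the compulsory parts. Either way the load of `σ` at `t` is at least the load of the
check, which exceeds `C`.
-/

/-- Soundness of the Time-Table failure check for RobustCumulative (Proposition 1):
if at some time `t` the sum of the heights of the activities whose compulsory part
contains `t`, plus the maximum height among activities whose K-compulsory part
contains `t` (`Finset.sup`, which is `0` on the empty set), exceeds `C`, then no
consistent assignment satisfies the RCuSP constraint. -/
theorem rcusp_time_table_failure_check
    {α : Type*} (A : Finset α) (p h k smin smax : α → ℕ) (C : ℕ)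
    (hp : ∀ a ∈ A, 0 < p a) (hh : ∀ a ∈ A, 0 < h a)
    (hdom : ∀ a ∈ A, smin a ≤ smax a)
    (hfail : ∃ t : ℕ,
      (∑ a ∈ A.filter (fun a => smax a ≤ t ∧ t < smin a + p a), h a)
        + (A.filter (fun a =>
            max (smax a) (smin a + p a) ≤ t ∧ t < smin a + p a + k a)).sup h
        > C) :
    ∀ σ : α → ℕ,
      (∀ a ∈ A, smin a ≤ σ a ∧ σ a ≤ smax a) →
      ¬ (∀ t : ℕ,
          (∑ a ∈ A.filter (fun a => σ a ≤ t ∧ t < σ a + p a), h a)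
            + (A.filter (fun b => σ b + p b ≤ t ∧ t < σ b + p b + k b)).sup h ≤ C) := by
  classical
  intro σ hσ hsat
  obtain ⟨t, ht⟩ := hfail
  have hC := hsat t
  have hsub : A.filter (fun a => smax a ≤ t ∧ t < smin a + p a) ⊆
      A.filter (fun a => σ a ≤ t ∧ t < σ a + p a) := by
    intro a ha
    rw [Finset.mem_filter] at ha ⊢
    have := hσ a ha.1
    exact ⟨ha.1, by omega, by omega⟩
  have hsum := Finset.sum_le_sum_of_subset (f := h) hsub
  rcases (A.filter (fun a =>
      max (smax a) (smin a + p a) ≤ t ∧ t < smin a + p a + k a)).eq_empty_or_nonempty with he | hne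
  · rw [he, Finset.sup_empty, Nat.bot_eq_zero] at ht
    omega
  · obtain ⟨b, hb, hbsup⟩ := Finset.exists_mem_eq_sup _ hne h
    rw [hbsup] at ht
    obtain ⟨hbA, hb1, hb2⟩ := Finset.mem_filter.mp hb
    have hbσ := hσ b hbA
    by_cases hend : σ b + p b ≤ t
    · have hle : h b ≤ (A.filter (fun b => σ b + p b ≤ t ∧ t < σ b + p b + k b)).sup h :=
        Finset.le_sup (Finset.mem_filter.mpr ⟨hbA, hend, by omega⟩)
      omega
    · have hnot : b ∉ A.filter (fun a => smax a ≤ t ∧ t < smin a + p a) := by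
        rw [Finset.mem_filter]
        omega
      have hrun : b ∈ A.filter (fun a => σ a ≤ t ∧ t < σ a + p a) :=
        Finset.mem_filter.mpr ⟨hbA, by omega, by omega⟩
      have hins := Finset.sum_le_sum_of_subset (f := h) (Finset.insert_subset hrun hsub)
      rw [Finset.sum_insert hnot] at hins
      omega
end

section
/- Soundness of the Time-Table failure check for Cumulative: If there exists a time t ∈ ℕ such that the sum of h a over all activities a ∈ A whose compulsory part contains t (i.e. smax a ≤ t < smin a + p a) is strictly greater than C, then no consistent assignment σ satisfies the cumulative constraint. -/
/-- Soundness of the Time-Table failure check for Cumulative: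
if at some time `t` the sum of the heights of the activities whose compulsory part
contains `t` exceeds `C`, then no consistent assignment satisfies the cumulative
constraint. -/
theorem cumulative_time_table_failure_check
    {α : Type*} (A : Finset α) (p h smin smax : α → ℕ) (C : ℕ)
    (hp : ∀ a ∈ A, 0 < p a) (hh : ∀ a ∈ A, 0 < h a)
    (hdom : ∀ a ∈ A, smin a ≤ smax a)
    (hfail : ∃ t : ℕ,
      (∑ a ∈ A.filter (fun a => smax a ≤ t ∧ t < smin a + p a), h a) > C) :
    ∀ σ : α → ℕ,
      (∀ a ∈ A, smin a ≤ σ a ∧ σ a ≤ smax a) →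
      ¬ (∀ t : ℕ,
          (∑ a ∈ A.filter (fun a => σ a ≤ t ∧ t < σ a + p a), h a) ≤ C) := by
  obtain ⟨t, ht⟩ := hfail
  intro σ hσ hcum
  refine absurd (hcum t) (not_le.mpr (lt_of_lt_of_le ht ?_))
  -- A consistent `σ` makes every activity run throughout its compulsory part.
  refine Finset.sum_le_sum_of_subset fun a ha => ?_
  rw [Finset.mem_filter] at ha ⊢
  obtain ⟨haA, h₁, h₂⟩ := ha
  obtain ⟨h₃, h₄⟩ := hσ a haA
  exact ⟨haA, by omega, by omega⟩
end

section
/- Soundness of lower-bound pruning, condition (1) of Property 2: Let b ∈ A. If there exists a time t with smin b ≤ t < smin b + p b such that h b, plus the sum of h a over all a ∈ A with a ≠ b whose compulsory part contains t (smax a ≤ t < smin a + p a), plus the maximum of h a over all a ∈ A whose K-compulsory part contains t (taken as 0 when no such a exists), is strictly greater than C, then no consistent assignment σ with σ b = smin b satisfies the RCuSP constraint. -/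
/-!
At the failing time `t`, activity `b` and every activity whose compulsory part contains `t`
are running under `σ`. Let `m` be an activity of maximal height whose K-compulsory part
contains `t`. Then `σ m ≤ t < σ m + p m + k m`, so `m` is either in its slack period at `t`,
and its height is bounded by the maximum in the constraint, or still running at `t`, and
its height is an additional term of the sum. Either way the load at `t` exceeds `C`.
-/

/-- Soundness of lower-bound pruning, condition (1) of Property 2: if at some
time `t ∈ [smin b, smin b + p b)` the height of `b`, plus the sum of the heights
of the other activities whose compulsory part contains `t`, plus the maximum
height among activities whose K-compulsory part contains `t` (`0` if none),
exceeds `C`, then no consistent assignment scheduling `b` at `smin b` satisfies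
the RCuSP constraint. -/
theorem rcusp_lower_bound_pruning_cond1
    {α : Type*} [DecidableEq α] (A : Finset α) (p h k smin smax : α → ℕ) (C : ℕ)
    (hp : ∀ a ∈ A, 0 < p a) (hh : ∀ a ∈ A, 0 < h a)
    (hdom : ∀ a ∈ A, smin a ≤ smax a)
    (b : α) (hb : b ∈ A)
    (hfail : ∃ t : ℕ, smin b ≤ t ∧ t < smin b + p b ∧
      h b
        + (∑ a ∈ A.filter (fun a => a ≠ b ∧ smax a ≤ t ∧ t < smin a + p a), h a)
        + (A.filter (fun a =>
            max (smax a) (smin a + p a) ≤ t ∧ t < smin a + p a + k a)).sup h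
        > C) :
    ∀ σ : α → ℕ,
      (∀ a ∈ A, smin a ≤ σ a ∧ σ a ≤ smax a) →
      σ b = smin b →
      ¬ (∀ t : ℕ,
          (∑ a ∈ A.filter (fun a => σ a ≤ t ∧ t < σ a + p a), h a)
            + (A.filter (fun c => σ c + p c ≤ t ∧ t < σ c + p c + k c)).sup h ≤ C) := by
  intro σ hσ hσb hC
  obtain ⟨t, hbt, htb, hgt⟩ := hfail
  have hCt := hC t
  set S := A.filter (fun a => a ≠ b ∧ smax a ≤ t ∧ t < smin a + p a) with hS
  set K := A.filter (fun a =>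
    max (smax a) (smin a + p a) ≤ t ∧ t < smin a + p a + k a) with hK
  set R := A.filter (fun a => σ a ≤ t ∧ t < σ a + p a) with hR
  set L := A.filter (fun c => σ c + p c ≤ t ∧ t < σ c + p c + k c) with hL
  have hbS : b ∉ S := by simp [hS]
  have hsub : insert b S ⊆ R := by
    intro a ha
    rcases Finset.mem_insert.1 ha with rfl | ha
    · exact Finset.mem_filter.2 ⟨hb, by omega, by omega⟩
    · obtain ⟨haA, -, h1, h2⟩ := Finset.mem_filter.1 ha
      have := hσ a haA
      exact Finset.mem_filter.2 ⟨haA, by omega, by omega⟩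
  have hsum : h b + ∑ a ∈ S, h a ≤ ∑ a ∈ R, h a := by
    rw [← Finset.sum_insert hbS]
    exact Finset.sum_le_sum_of_subset hsub
  rcases K.eq_empty_or_nonempty with hKe | hKne
  · rw [hKe, Finset.sup_empty, Nat.bot_eq_zero] at hgt
    omega
  · obtain ⟨m, hmK, hm⟩ := Finset.exists_mem_eq_sup K hKne h
    rw [hm] at hgt
    obtain ⟨hmA, h1, h2⟩ := Finset.mem_filter.1 hmK
    have h3 : smax m ≤ t := le_trans (le_max_left _ _) h1
    have h4 : smin m + p m ≤ t := le_trans (le_max_right _ _) h1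
    have hm' := hσ m hmA
    by_cases hrun : σ m + p m ≤ t
    · have hmL : m ∈ L := Finset.mem_filter.2 ⟨hmA, hrun, by omega⟩
      have : h m ≤ L.sup h := Finset.le_sup hmL
      omega
    · have hmR : m ∈ R := Finset.mem_filter.2 ⟨hmA, by omega, by omega⟩
      -- `m` is still running at `t`; it is a further summand, since its earliest
      -- end is at most `t`, unlike that of `b` and of the members of `S`.
      have hmS : m ∉ insert b S := by
        intro hmem
        rcases Finset.mem_insert.1 hmem with rfl | hmem
        · omega
        · have := (Finset.mem_filter.1 hmem).2.2.2
          omega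
      have hsum' : h m + (h b + ∑ a ∈ S, h a) ≤ ∑ a ∈ R, h a := by
        rw [← Finset.sum_insert hbS, ← Finset.sum_insert hmS]
        exact Finset.sum_le_sum_of_subset (Finset.insert_subset hmR hsub)
      omega
end

section
/- Soundness of lower-bound pruning, condition (2) of Property 2: Let b ∈ A. If there exists a time t with smin b + p b ≤ t < smin b + p b + k b such that the sum of h a over all a ∈ A whose compulsory part contains t (smax a ≤ t < smin a + p a), plus h b, is strictly greater than C, then no consistent assignment σ with σ b = smin b satisfies the RCuSP constraint. -/
/-!
The constraint already fails at the given time `t`. Every activity whose compulsory part contains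
`t` is running at `t` under any consistent assignment, so the load at `t` is at least the compulsory
load. With `b` started at `smin b`, the time `t` falls in the slack window of `b`, so the maximum
over delayed activities is at least `h b`. The two bounds add up to more than `C`.
-/

/-- Soundness of lower-bound pruning, condition (2) of Property 2: if at some
time `t ∈ [smin b + p b, smin b + p b + k b)` the sum of the heights of the
activities whose compulsory part contains `t`, plus the height of `b`, exceeds
`C`, then no consistent assignment scheduling `b` at `smin b` satisfies the
RCuSP constraint. -/
theorem rcusp_lower_bound_pruning_cond2
    {α : Type*} (A : Finset α) (p h k smin smax : α → ℕ) (C : ℕ)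
    (hp : ∀ a ∈ A, 0 < p a) (hh : ∀ a ∈ A, 0 < h a)
    (hdom : ∀ a ∈ A, smin a ≤ smax a)
    (b : α) (hb : b ∈ A)
    (hfail : ∃ t : ℕ, smin b + p b ≤ t ∧ t < smin b + p b + k b ∧
      (∑ a ∈ A.filter (fun a => smax a ≤ t ∧ t < smin a + p a), h a) + h b > C) :
    ∀ σ : α → ℕ,
      (∀ a ∈ A, smin a ≤ σ a ∧ σ a ≤ smax a) →
      σ b = smin b →
      ¬ (∀ t : ℕ,
          (∑ a ∈ A.filter (fun a => σ a ≤ t ∧ t < σ a + p a), h a)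
            + (A.filter (fun c => σ c + p c ≤ t ∧ t < σ c + p c + k c)).sup h ≤ C) := by
  obtain ⟨t, ht₁, ht₂, hC⟩ := hfail
  intro σ hσ hσb hall
  -- Under a consistent assignment, an activity runs throughout its compulsory part.
  have hsum : (∑ a ∈ A.filter (fun a => smax a ≤ t ∧ t < smin a + p a), h a) ≤
      ∑ a ∈ A.filter (fun a => σ a ≤ t ∧ t < σ a + p a), h a := by
    apply Finset.sum_le_sum_of_subset
    intro a ha
    rw [Finset.mem_filter] at ha ⊢
    have hσa := hσ a ha.1
    exact ⟨ha.1, by omega, by omega⟩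
  -- Since `σ b = smin b`, time `t` lies in the slack window of `b`.
  have hsup : h b ≤ (A.filter (fun c => σ c + p c ≤ t ∧ t < σ c + p c + k c)).sup h := by
    apply Finset.le_sup (f := h)
    rw [Finset.mem_filter]
    exact ⟨hb, by omega, by omega⟩
  have hle := hall t
  omega
end

section
/- Soundness of upper-bound pruning, condition (1) of Property 3: Let b ∈ A. If there exists a time t with smax b ≤ t < smax b + p b such that h b, plus the sum of h a over all a ∈ A with a ≠ b whose compulsory part contains t (smax a ≤ t < smin a + p a), plus the maximum of h a over all a ∈ A with a ≠ b whose K-compulsory part contains t (taken as 0 when no such a exists), is strictly greater than C, then no consistent assignment σ with σ b = smax b satisfies the RCuSP constraint. -/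
/-!
Fix the time `t` of the overload and a consistent `σ` with `σ b = smax b`. The activity `b` and every
activity whose compulsory part contains `t` run at `t` under `σ`. Let `a` attain the maximum height
among the activities whose K-compulsory part contains `t`. Since
`σ a ≤ smax a ≤ t < smin a + p a + k a ≤ σ a + p a + k a`, at time `t` the activity `a` is either in its
slack, and then its height is bounded by the slack term of the constraint, or still running. In the
latter case it is a further summand of the load, because the K-compulsory part of `a` is disjoint from
its compulsory part and `a ≠ b`. Either way the left-hand side of the constraint at `t` is at least the
overloaded quantity.
-/

/-- Soundness of upper-bound pruning, condition (1) of Property 3: if at some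
time `t ∈ [smax b, smax b + p b)` the height of `b`, plus the sum of the heights
of the other activities whose compulsory part contains `t`, plus the maximum
height among activities other than `b` whose K-compulsory part contains `t`
(`0` if none), exceeds `C`, then no consistent assignment scheduling `b` at
`smax b` satisfies the RCuSP constraint. -/
theorem rcusp_upper_bound_pruning_cond1
    {α : Type*} [DecidableEq α] (A : Finset α) (p h k smin smax : α → ℕ) (C : ℕ)
    (hp : ∀ a ∈ A, 0 < p a) (hh : ∀ a ∈ A, 0 < h a)
    (hdom : ∀ a ∈ A, smin a ≤ smax a)
    (b : α) (hb : b ∈ A)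
    (hfail : ∃ t : ℕ, smax b ≤ t ∧ t < smax b + p b ∧
      h b
        + (∑ a ∈ A.filter (fun a => a ≠ b ∧ smax a ≤ t ∧ t < smin a + p a), h a)
        + (A.filter (fun a => a ≠ b ∧
            max (smax a) (smin a + p a) ≤ t ∧ t < smin a + p a + k a)).sup h
        > C) :
    ∀ σ : α → ℕ,
      (∀ a ∈ A, smin a ≤ σ a ∧ σ a ≤ smax a) →
      σ b = smax b →
      ¬ (∀ t : ℕ,
          (∑ a ∈ A.filter (fun a => σ a ≤ t ∧ t < σ a + p a), h a)
            + (A.filter (fun c => σ c + p c ≤ t ∧ t < σ c + p c + k c)).sup h ≤ C) := by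
  intro σ hσ hσb hcon
  obtain ⟨t, hbt, htb, hgt⟩ := hfail
  specialize hcon t
  set S := A.filter (fun a => a ≠ b ∧ smax a ≤ t ∧ t < smin a + p a) with hS
  set K := A.filter (fun a => a ≠ b ∧
    max (smax a) (smin a + p a) ≤ t ∧ t < smin a + p a + k a) with hK
  set R := A.filter (fun a => σ a ≤ t ∧ t < σ a + p a) with hR
  set L := A.filter (fun c => σ c + p c ≤ t ∧ t < σ c + p c + k c) with hL
  have hbS : b ∉ S := by simp [hS]
  have hsub : insert b S ⊆ R := by
    intro a ha
    rcases Finset.mem_insert.mp ha with rfl | ha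
    · exact Finset.mem_filter.mpr ⟨hb, by omega, by omega⟩
    · obtain ⟨haA, -, h1, h2⟩ := Finset.mem_filter.mp ha
      have := hσ a haA
      exact Finset.mem_filter.mpr ⟨haA, by omega, by omega⟩
  have hsum : h b + ∑ a ∈ S, h a ≤ ∑ a ∈ R, h a := by
    rw [← Finset.sum_insert hbS]
    exact Finset.sum_le_sum_of_subset hsub
  rcases K.eq_empty_or_nonempty with hKe | hKne
  · rw [hKe, Finset.sup_empty, Nat.bot_eq_zero] at hgt
    omega
  · obtain ⟨a, haK, hsup⟩ := Finset.exists_mem_eq_sup K hKne h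
    obtain ⟨haA, hab, h1, h2⟩ := Finset.mem_filter.mp haK
    have h3 := hσ a haA
    by_cases hend : σ a + p a ≤ t
    · have haL : a ∈ L := Finset.mem_filter.mpr ⟨haA, hend, by omega⟩
      have : h a ≤ L.sup h := Finset.le_sup haL
      omega
    · have haR : a ∈ R := Finset.mem_filter.mpr ⟨haA, by omega, by omega⟩
      have haS : a ∉ insert b S := by
        intro hmem
        rcases Finset.mem_insert.mp hmem with hmem | hmem
        · exact hab hmem
        · have := (Finset.mem_filter.mp hmem).2
          omega
      have hle : ∑ x ∈ insert a (insert b S), h x ≤ ∑ x ∈ R, h x :=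
        Finset.sum_le_sum_of_subset (Finset.insert_subset haR hsub)
      rw [Finset.sum_insert haS, Finset.sum_insert hbS] at hle
      omega
end

section
/- Soundness of upper-bound pruning, condition (2) of Property 3: Let b ∈ A. If there exists a time t with smax b + p b ≤ t < smax b + p b + k b such that the sum of h a over all a ∈ A whose compulsory part contains t (smax a ≤ t < smin a + p a), plus h b, is strictly greater than C, then no consistent assignment σ with σ b = smax b satisfies the RCuSP constraint. -/
/-!
At the failing time `t`, every activity whose compulsory part contains `t` runs under any
consistent `σ`, and `b`, started at `smax b`, has `t` in its slack window. Hence the robust load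
of `σ` at `t` is at least the compulsory load plus `h b`, which exceeds `C`.
-/

/-- Soundness of upper-bound pruning, condition (2) of Property 3: if at some
time `t ∈ [smax b + p b, smax b + p b + k b)` the sum of the heights of the
activities whose compulsory part contains `t`, plus the height of `b`, exceeds
`C`, then no consistent assignment scheduling `b` at `smax b` satisfies the
RCuSP constraint. -/
theorem rcusp_upper_bound_pruning_cond2
    {α : Type*} (A : Finset α) (p h k smin smax : α → ℕ) (C : ℕ)
    (hp : ∀ a ∈ A, 0 < p a) (hh : ∀ a ∈ A, 0 < h a)
    (hdom : ∀ a ∈ A, smin a ≤ smax a)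
    (b : α) (hb : b ∈ A)
    (hfail : ∃ t : ℕ, smax b + p b ≤ t ∧ t < smax b + p b + k b ∧
      (∑ a ∈ A.filter (fun a => smax a ≤ t ∧ t < smin a + p a), h a) + h b > C) :
    ∀ σ : α → ℕ,
      (∀ a ∈ A, smin a ≤ σ a ∧ σ a ≤ smax a) →
      σ b = smax b →
      ¬ (∀ t : ℕ,
          (∑ a ∈ A.filter (fun a => σ a ≤ t ∧ t < σ a + p a), h a)
            + (A.filter (fun c => σ c + p c ≤ t ∧ t < σ c + p c + k c)).sup h ≤ C) := by
  obtain ⟨t, ht1, ht2, hC⟩ := hfail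
  intro σ hσ hσb hrc
  -- An activity whose compulsory part contains `t` is running at `t` under `σ`.
  have hsum : (∑ a ∈ A.filter (fun a => smax a ≤ t ∧ t < smin a + p a), h a)
      ≤ ∑ a ∈ A.filter (fun a => σ a ≤ t ∧ t < σ a + p a), h a := by
    apply Finset.sum_le_sum_of_subset
    intro a ha
    rw [Finset.mem_filter] at ha ⊢
    have := hσ a ha.1
    exact ⟨ha.1, by omega, by omega⟩
  -- Since `σ b = smax b`, the time `t` lies in the slack window of `b`.
  have hsup : h b ≤ (A.filter (fun c => σ c + p c ≤ t ∧ t < σ c + p c + k c)).sup h := by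
    apply Finset.le_sup (f := h)
    rw [Finset.mem_filter, hσb]
    exact ⟨hb, ht1, ht2⟩
  have := hrc t
  omega
end

section
/- Soundness of Time-Table pruning for Cumulative (Property 1 rule): Let b ∈ A. If there exists a time t with smin b ≤ t < smin b + p b such that h b, plus the sum of h a over all a ∈ A with a ≠ b whose compulsory part contains t (smax a ≤ t < smin a + p a), is strictly greater than C, then no consistent assignment σ with σ b = smin b satisfies the cumulative constraint. -/
/-!
An activity `a` with `smin a ≤ σ a ≤ smax a` runs throughout its compulsory part
`[smax a, smin a + p a)`. At the given time `t`, all activities whose compulsory part contains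
`t` are therefore running, and so is `b`, which starts at `smin b`. Heights being nonnegative,
the load at `t` is at least the sum in the hypothesis, which exceeds `C`.
-/

/-- Soundness of Time-Table pruning for Cumulative (Property 1 rule): if at some
time `t ∈ [smin b, smin b + p b)` the height of `b`, plus the sum of the heights
of the other activities whose compulsory part contains `t`, exceeds `C`, then no
consistent assignment scheduling `b` at `smin b` satisfies the cumulative
constraint. -/
theorem cumulative_time_table_pruning
    {α : Type*} [DecidableEq α] (A : Finset α) (p h smin smax : α → ℕ) (C : ℕ)
    (hp : ∀ a ∈ A, 0 < p a) (hh : ∀ a ∈ A, 0 < h a)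
    (hdom : ∀ a ∈ A, smin a ≤ smax a)
    (b : α) (hb : b ∈ A)
    (hfail : ∃ t : ℕ, smin b ≤ t ∧ t < smin b + p b ∧
      h b + (∑ a ∈ A.filter (fun a => a ≠ b ∧ smax a ≤ t ∧ t < smin a + p a), h a) > C) :
    ∀ σ : α → ℕ,
      (∀ a ∈ A, smin a ≤ σ a ∧ σ a ≤ smax a) →
      σ b = smin b →
      ¬ (∀ t : ℕ,
          (∑ a ∈ A.filter (fun a => σ a ≤ t ∧ t < σ a + p a), h a) ≤ C) := by
  obtain ⟨t, ht₁, ht₂, hC⟩ := hfail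
  intro σ hσ hσb hcum
  have hsub : insert b (A.filter (fun a => a ≠ b ∧ smax a ≤ t ∧ t < smin a + p a)) ⊆
      A.filter (fun a => σ a ≤ t ∧ t < σ a + p a) := by
    intro a ha
    rcases Finset.mem_insert.1 ha with rfl | ha
    · exact Finset.mem_filter.2 ⟨hb, by omega, by omega⟩
    · obtain ⟨haA, -, h₁, h₂⟩ := Finset.mem_filter.1 ha
      have := hσ a haA
      exact Finset.mem_filter.2 ⟨haA, by omega, by omega⟩
  have hle := (Finset.sum_le_sum_of_subset (f := h) hsub).trans (hcum t)
  rw [Finset.sum_insert (by simp)] at hle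
  omega
end

section
/- Dominance of the naive duration-extension approach: If an assignment σ : A → ℕ satisfies the cumulative constraint for the instance in which every activity a has duration p a + k a (i.e. for every t ∈ ℕ, the sum of h a over all a ∈ A with σ a ≤ t < σ a + p a + k a is at most C), then σ satisfies the RCuSP constraint with durations p and slacks k. -/
/-!
At each time `t`, the activities running with durations `p` and those inside their slack window
are disjoint, and both kinds are running in the instance with durations `p + k`. The maximum height
over the second kind is at most the sum of its heights, so the RCuSP load at `t` is at most the
load at `t` of the extended instance, hence at most `C`.
-/

/-- Dominance of the naive duration-extension approach: if `σ` satisfies the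
cumulative constraint for the instance where every activity `a` has duration
`p a + k a`, then `σ` satisfies the RCuSP constraint with durations `p` and
slacks `k`. -/
theorem naive_extension_dominates_rcusp
    {α : Type*} (A : Finset α) (p h k : α → ℕ) (C : ℕ)
    (hp : ∀ a ∈ A, 0 < p a) (hh : ∀ a ∈ A, 0 < h a)
    (σ : α → ℕ)
    (hnaive : ∀ t : ℕ,
      (∑ a ∈ A.filter (fun a => σ a ≤ t ∧ t < σ a + p a + k a), h a) ≤ C) :
    ∀ t : ℕ,
      (∑ a ∈ A.filter (fun a => σ a ≤ t ∧ t < σ a + p a), h a)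
        + (A.filter (fun b => σ b + p b ≤ t ∧ t < σ b + p b + k b)).sup h ≤ C := by
  classical
  intro t
  -- An activity in its slack window has already finished running.
  have hdisj : Disjoint (A.filter (fun a => σ a ≤ t ∧ t < σ a + p a))
      (A.filter (fun b => σ b + p b ≤ t ∧ t < σ b + p b + k b)) := by
    rw [Finset.disjoint_filter]
    intro a _ h1 h2
    omega
  have hsup : (A.filter (fun b => σ b + p b ≤ t ∧ t < σ b + p b + k b)).sup h
      ≤ ∑ b ∈ A.filter (fun b => σ b + p b ≤ t ∧ t < σ b + p b + k b), h b :=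
    Finset.sup_le fun b hb => Finset.single_le_sum (fun _ _ => Nat.zero_le _) hb
  refine (Nat.add_le_add_left hsup _).trans (le_trans ?_ (hnaive t))
  rw [← Finset.sum_union hdisj]
  apply Finset.sum_le_sum_of_subset
  intro a ha
  simp only [Finset.mem_union, Finset.mem_filter] at ha ⊢
  rcases ha with ⟨hA, h1, h2⟩ | ⟨hA, h1, h2⟩
  · exact ⟨hA, by omega, by omega⟩
  · exact ⟨hA, by omega, by omega⟩
end

section
/- Robustness semantics of RCuSP (absorption of one delay): If an assignment σ : A → ℕ satisfies the RCuSP constraint, then for every activity b ∈ A and every delay d ∈ ℕ with d ≤ k b, the schedule in which b has duration p b + d and every other activity a keeps duration p a satisfies the cumulative constraint: for every t ∈ ℕ, the sum of h a over all a ∈ A executing at t under the modified durations is at most C. -/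
/-!
At a time `t`, delaying `b` by `d ≤ k b` can add at most `b` itself to the set of executing
activities. If `t` lies in the extension `[σ b + p b, σ b + p b + d)`, then `t` is in the slack
window of `b`, so `h b` is bounded by the maximum reserved by the RCuSP constraint; otherwise
no activity is added.
-/

/-- Robustness semantics of RCuSP (absorption of one delay): if `σ` satisfies
the RCuSP constraint, then for every activity `b ∈ A` and every delay `d ≤ k b`,
the schedule in which `b` has duration `p b + d` and every other activity keeps
its duration satisfies the cumulative constraint. -/
theorem rcusp_absorbs_one_delay
    {α : Type*} [DecidableEq α] (A : Finset α) (p h k : α → ℕ) (C : ℕ)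
    (hp : ∀ a ∈ A, 0 < p a) (hh : ∀ a ∈ A, 0 < h a)
    (σ : α → ℕ)
    (hrcusp : ∀ t : ℕ,
      (∑ a ∈ A.filter (fun a => σ a ≤ t ∧ t < σ a + p a), h a)
        + (A.filter (fun b => σ b + p b ≤ t ∧ t < σ b + p b + k b)).sup h ≤ C) :
    ∀ b ∈ A, ∀ d : ℕ, d ≤ k b →
      ∀ t : ℕ,
        (∑ a ∈ A.filter
            (fun a => σ a ≤ t ∧ t < σ a + (p a + if a = b then d else 0)), h a) ≤ C := by
  intro b hb d hd t
  by_cases hbt : σ b + p b ≤ t ∧ t < σ b + p b + d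
  · have hsup : h b ≤ (A.filter (fun b => σ b + p b ≤ t ∧ t < σ b + p b + k b)).sup h :=
      Finset.le_sup (f := h) (Finset.mem_filter.mpr ⟨hb, hbt.1, by omega⟩)
    have hsub : A.filter (fun a => σ a ≤ t ∧ t < σ a + (p a + if a = b then d else 0)) ⊆
        insert b (A.filter (fun a => σ a ≤ t ∧ t < σ a + p a)) := by
      intro a ha
      by_cases hab : a = b <;> simp_all
    have hnot : b ∉ A.filter (fun a => σ a ≤ t ∧ t < σ a + p a) := by
      simp only [Finset.mem_filter]
      omega
    have hsum := Finset.sum_le_sum_of_subset (f := h) hsub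
    rw [Finset.sum_insert hnot] at hsum
    have := hrcusp t
    omega
  · have hsub : A.filter (fun a => σ a ≤ t ∧ t < σ a + (p a + if a = b then d else 0)) ⊆
        A.filter (fun a => σ a ≤ t ∧ t < σ a + p a) := by
      intro a ha
      simp only [Finset.mem_filter] at ha ⊢
      refine ⟨ha.1, ha.2.1, ?_⟩
      have h2 := ha.2.2
      split_ifs at h2 with hab
      · subst hab
        omega
      · omega
    have hsum := Finset.sum_le_sum_of_subset (f := h) hsub
    have := hrcusp t
    omega
end

section
/- Robustness semantics of RCuSP^r (absorption of r delays, subset formulation): Suppose an assignment σ : A → ℕ satisfies: for every t ∈ ℕ and every subset T of {b ∈ A : σ b + p b ≤ t < σ b + p b + k b} with |T| ≤ r, the sum of h a over all a ∈ A with σ a ≤ t < σ a + p a, plus the sum of h b over b ∈ T, is at most C. Then for every function d : A → ℕ with d a ≤ k a for all a ∈ A and with {a ∈ A : d a > 0} of cardinality at most r, the schedule in which every activity a has duration p a + d a satisfies the cumulative constraint: for every t ∈ ℕ, the sum of h a over all a ∈ A with σ a ≤ t < σ a + p a + d a is at most C. -/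
/-!
Fix a time `t` and admissible delays `d`. An activity running at `t` in the delayed schedule
either already runs at `t` without its delay, or `t` lies in `[σ b + p b, σ b + p b + d b)`.
The activities of the second kind have positive delay, so there are at most `r` of them, and
since `d ≤ k` their slack windows contain `t`. They therefore form an admissible subset `T` in
the robust constraint, whose bound at `t` is the bound on the delayed load.
-/

/-- Robustness semantics of RCuSP^r (absorption of `r` delays, subset
formulation): if for every time `t` and every subset `T` of at most `r`
activities whose slack window contains `t` the load at `t` plus the heights of
`T` fits in `C`, then for every delay function `d` bounded by the slacks and
positive on at most `r` activities, the schedule with durations `p a + d a`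
satisfies the cumulative constraint. -/
theorem rcusp_r_absorbs_r_delays
    {α : Type*} [DecidableEq α] (A : Finset α) (p h k : α → ℕ) (C : ℕ) (r : ℕ)
    (hp : ∀ a ∈ A, 0 < p a) (hh : ∀ a ∈ A, 0 < h a) (hr : 1 ≤ r)
    (σ : α → ℕ)
    (hsat : ∀ t : ℕ, ∀ T : Finset α,
      T ⊆ A.filter (fun b => σ b + p b ≤ t ∧ t < σ b + p b + k b) →
      T.card ≤ r →
      (∑ a ∈ A.filter (fun a => σ a ≤ t ∧ t < σ a + p a), h a)
        + (∑ b ∈ T, h b) ≤ C) :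
    ∀ d : α → ℕ,
      (∀ a ∈ A, d a ≤ k a) →
      (A.filter (fun a => 0 < d a)).card ≤ r →
      ∀ t : ℕ,
        (∑ a ∈ A.filter (fun a => σ a ≤ t ∧ t < σ a + p a + d a), h a) ≤ C := by
  intro d hdk hcard t
  -- `T` is the set of activities that run at time `t` only because of their delay.
  set T := A.filter (fun b => σ b + p b ≤ t ∧ t < σ b + p b + d b) with hT
  have hTslack : T ⊆ A.filter (fun b => σ b + p b ≤ t ∧ t < σ b + p b + k b) := by
    intro b hb
    simp only [hT, Finset.mem_filter] at hb ⊢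
    have := hdk b hb.1
    exact ⟨hb.1, by omega, by omega⟩
  have hTcard : T.card ≤ r := by
    refine (Finset.card_le_card fun b hb => ?_).trans hcard
    simp only [hT, Finset.mem_filter] at hb ⊢
    exact ⟨hb.1, by omega⟩
  have hcover : A.filter (fun a => σ a ≤ t ∧ t < σ a + p a + d a)
      ⊆ A.filter (fun a => σ a ≤ t ∧ t < σ a + p a) ∪ T := by
    intro a ha
    simp only [hT, Finset.mem_union, Finset.mem_filter] at ha ⊢
    by_cases hrun : t < σ a + p a
    · exact Or.inl ⟨ha.1, ha.2.1, hrun⟩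
    · exact Or.inr ⟨ha.1, by omega, ha.2.2⟩
  have hdisj : Disjoint (A.filter (fun a => σ a ≤ t ∧ t < σ a + p a)) T := by
    refine Finset.disjoint_left.mpr fun a ha hb => ?_
    simp only [hT, Finset.mem_filter] at ha hb
    omega
  calc ∑ a ∈ A.filter (fun a => σ a ≤ t ∧ t < σ a + p a + d a), h a
      ≤ ∑ a ∈ A.filter (fun a => σ a ≤ t ∧ t < σ a + p a) ∪ T, h a :=
        Finset.sum_le_sum_of_subset hcover
    _ = (∑ a ∈ A.filter (fun a => σ a ≤ t ∧ t < σ a + p a), h a) + ∑ b ∈ T, h b :=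
        Finset.sum_union hdisj
    _ ≤ C := hsat t T hTslack hTcard
end
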